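/- Let F, E ⊆ X^ω with F Δ E ⊆ F', where E is open and F' is a regular ω-language of first Baire category. Then for every Borel measure μ on X^ω with 0 < μ(X^ω) < ∞, with support supp(μ) = X^ω, and satisfying the balance condition, it holds that μ(F) = 0 if and only if F is of first Baire category. -/

import Mathlib

open Set MeasureTheory Computability

namespace AutoBaire

/-- The Cantor topology on the space of ω-words over `X`:
the product of the discrete topology on `X`. -/
def cantorTop (X : Type) : TopologicalSpace (ℕ → X) :=
  @Pi.topologicalSpace ℕ (fun _ => X) (fun _ => ⊥)

/-- The Borel σ-algebra of the Cantor space. -/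
def cantorBorel (X : Type) : MeasurableSpace (ℕ → X) :=
  @borel (ℕ → X) (cantorTop X)

variable {X : Type}

/-- Concatenation `w·ξ` of a finite word with an ω-word. -/
def wcat (w : List X) (ξ : ℕ → X) : ℕ → X :=
  Stream'.appendStream' w ξ

/-- The ball (cylinder) `w·X^ω`. -/
def cyl (w : List X) : Set (ℕ → X) := {ξ | ∃ η : ℕ → X, ξ = wcat w η}

/-- The ω-language `W·A` for a language `W` and an ω-language `A`. -/
def catOmega (W : Language X) (A : Set (ℕ → X)) : Set (ℕ → X) :=
  {ξ | ∃ w ∈ W, ∃ η ∈ A, ξ = wcat w η}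

/-- `V^ω`: the set of ω-words that are infinite concatenations
`v₁·v₂·⋯` of non-empty words `vᵢ ∈ V`. -/
def omegaPow (V : Language X) : Set (ℕ → X) :=
  {ξ | ∃ f : ℕ → List X, (∀ i, f i ∈ V ∧ f i ≠ []) ∧
    ∀ k, ξ ∈ cyl (((List.range k).map f).flatten)}

/-- Regular languages: those obtained from finite languages via the operations
union, concatenation and star. -/
inductive IsRegLang : Language X → Prop
  | finite (W : Language X) : (W : Set (List X)).Finite → IsRegLang W
  | union (W V : Language X) : IsRegLang W → IsRegLang V → IsRegLang (W + V)
  | concat (W V : Language X) : IsRegLang W → IsRegLang V → IsRegLang (W * V)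
  | star (W : Language X) : IsRegLang W → IsRegLang (W∗)

/-- Regular ω-languages: finite unions `⋃ᵢ Wᵢ·Vᵢ^ω` with `Wᵢ, Vᵢ` regular. -/
def IsRegOmega (F : Set (ℕ → X)) : Prop :=
  ∃ (n : ℕ) (W V : Fin n → Language X),
    (∀ i, IsRegLang (W i) ∧ IsRegLang (V i)) ∧
    F = ⋃ i, catOmega (W i) (omegaPow (V i))

/-- `X*·w·X^ω`: the set of ω-words containing `w` as an infix. -/
def infixOcc (w : List X) : Set (ℕ → X) :=
  {ξ | ∃ u : List X, ξ ∈ cyl (u ++ w)}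

/-- An ω-word is disjunctive if every finite word occurs in it as an infix. -/
def Disjunctive (ξ : ℕ → X) : Prop := ∀ w : List X, ξ ∈ infixOcc w

/-- Ultimately periodic ω-words: `ξ = w·v·v·v·⋯` with `v ≠ e`. -/
def UltPeriodic (ξ : ℕ → X) : Prop :=
  ∃ (w v : List X) (h : v ≠ []), ξ = wcat w (Stream'.cycle v h)

/-- The Automatic Baire property: `F Δ E ⊆ F'` for some regular open
ω-language `E` and some regular ω-language `F'` of first Baire category. -/
def HasABP (F : Set (ℕ → X)) : Prop :=
  ∃ E F' : Set (ℕ → X),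
    IsRegOmega E ∧ @IsOpen _ (cantorTop X) E ∧
    IsRegOmega F' ∧ @IsMeagre _ (cantorTop X) F' ∧
    symmDiff F E ⊆ F'

/-- The measure is finite and non-null: `0 < μ(X^ω) < ∞`. -/
def FiniteNonNull (μ : @MeasureTheory.Measure (ℕ → X) (cantorBorel X)) : Prop :=
  0 < μ Set.univ ∧ μ Set.univ < ⊤

/-- `supp(μ) = X^ω`: every non-empty open set has positive measure. -/
def FullSupport (μ : @MeasureTheory.Measure (ℕ → X) (cantorBorel X)) : Prop :=
  ∀ U : Set (ℕ → X), @IsOpen _ (cantorTop X) U → U.Nonempty → 0 < μ U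

/-- The balance condition: there is `c > 0` such that for all `w ∈ X*`, `x ∈ X`
either `μ(wx·X^ω) = 0` or `c·μ(w·X^ω) ≤ μ(wx·X^ω)`. -/
def Balanced (μ : @MeasureTheory.Measure (ℕ → X) (cantorBorel X)) : Prop :=
  ∃ c : ENNReal, 0 < c ∧ ∀ (w : List X) (x : X),
    μ (cyl (w ++ [x])) = 0 ∨ c * μ (cyl w) ≤ μ (cyl (w ++ [x]))

/-!
Off the meagre set `F'` the sets `F` and `E` coincide, so as soon as `F'` is known to be a null set,
both sides of the equivalence say that the open set `E` is empty.

`F'` is a countable union of sets `w·V^ω` with `V` regular. If such a set is meagre, every word `v`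
extends to a word `v·y` that is a prefix of no word of `V∗`: otherwise the player of the
Banach–Mazur game who wants to land in `w·V^ω` could always return to `V∗` and would win. Whether
`y` works depends only on the left quotient of `V∗` by `v`, and `V∗` has finitely many of them, so
the length of `y` can be bounded independently of `v`. Hence in every ball `V^ω` misses a subball of
bounded relative depth, which by the balance condition carries at least a fixed fraction `δ > 0` of
the measure of the ball. Iterating inside the remaining balls bounds the measure by multiples of
`(1 - δ)^n`.
-/

attribute [local instance] cantorTop cantorBorel

section Balls

theorem wcat_append (u v : List X) (η : ℕ → X) : wcat (u ++ v) η = wcat u (wcat v η) :=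
  Stream'.append_append_stream u v η

theorem wcat_injective (u : List X) : Function.Injective (wcat u) :=
  Stream'.append_right_injective u

theorem wcat_mem_cyl (u : List X) (η : ℕ → X) : wcat u η ∈ cyl u := ⟨η, rfl⟩

theorem cyl_nonempty [Nonempty X] (u : List X) : (cyl u).Nonempty :=
  ⟨_, wcat_mem_cyl u fun _ => Classical.arbitrary X⟩

@[simp]
theorem cyl_nil : cyl ([] : List X) = univ := eq_univ_of_forall fun ξ => ⟨ξ, rfl⟩

theorem wcat_mem_cyl_append {u v : List X} {η : ℕ → X} :
    wcat u η ∈ cyl (u ++ v) ↔ η ∈ cyl v := by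
  simp only [cyl, mem_ofPred_eq, wcat_append, (wcat_injective u).eq_iff]

theorem mem_cyl_iff {w : List X} {ξ : ℕ → X} :
    ξ ∈ cyl w ↔ ∀ i (h : i < w.length), ξ i = w[i] := by
  constructor
  · rintro ⟨η, rfl⟩ i h
    exact Stream'.get_append_left i w η h
  · intro h
    refine ⟨fun n => ξ (w.length + n), funext fun i => ?_⟩
    rcases lt_or_ge i w.length with hi | hi
    · exact (h i hi).trans (Stream'.get_append_left i w _ hi).symm
    · obtain ⟨k, rfl⟩ := Nat.exists_eq_add_of_le hi
      exact (Stream'.get_append_right k w fun n => ξ (w.length + n)).symm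

theorem cyl_subset_cyl_of_prefix {u v : List X} (h : u <+: v) : cyl v ⊆ cyl u := by
  obtain ⟨t, rfl⟩ := h
  rintro _ ⟨η, rfl⟩
  exact ⟨wcat t η, wcat_append u t η⟩

theorem prefix_of_mem_cyl {u v : List X} {ξ : ℕ → X} (hu : ξ ∈ cyl u) (hv : ξ ∈ cyl v)
    (h : u.length ≤ v.length) : u <+: v := by
  rw [mem_cyl_iff] at hu hv
  exact List.prefix_iff_getElem.2 ⟨h, fun i hi => (hu i hi).symm.trans (hv i (hi.trans_le h))⟩

theorem cyl_eq_iUnion (u : List X) : cyl u = ⋃ x, cyl (u ++ [x]) := by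
  refine Subset.antisymm ?_ (iUnion_subset fun x => cyl_subset_cyl_of_prefix (u.prefix_append _))
  rintro _ ⟨η, rfl⟩
  have h : η ∈ cyl [η 0] := ⟨fun i => η (i + 1), funext fun i => by cases i <;> rfl⟩
  exact mem_iUnion.2 ⟨η 0, wcat_mem_cyl_append.2 h⟩

theorem pairwise_disjoint_cyl_append_singleton (u : List X) :
    Pairwise fun x y => Disjoint (cyl (u ++ [x])) (cyl (u ++ [y])) := by
  intro x y hxy
  rw [Set.disjoint_left]
  intro ξ hx hy
  simpa [hxy] using prefix_of_mem_cyl hx hy (by simp)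

theorem exists_forall_mem_cyl {p : ℕ → List X} (hp : ∀ k, p k <+: p (k + 1))
    (hlen : ∀ k, k ≤ (p k).length) : ∃ ξ : ℕ → X, ∀ k, ξ ∈ cyl (p k) := by
  have mono {k l : ℕ} (hkl : k ≤ l) : p k <+: p l :=
    Nat.le_induction List.prefix_rfl (fun l _ ih => ih.trans (hp l)) l hkl
  refine ⟨fun i => (p (i + 1))[i]'(hlen (i + 1)), fun k => mem_cyl_iff.2 fun i hi => ?_⟩
  rcases le_total (i + 1) k with h | h
  · exact (mono h).getElem (hlen (i + 1))
  · exact ((mono h).getElem hi).symm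

theorem catOmega_eq_biUnion (W : Language X) (A : Set (ℕ → X)) :
    catOmega W A = ⋃ w ∈ W, wcat w '' A := by
  ext ξ
  simp only [catOmega, mem_ofPred_eq, mem_iUnion, mem_image, exists_prop, eq_comm]

end Balls

section Topology

theorem cyl_eq_cylinder {u : List X} {ξ : ℕ → X} (h : ξ ∈ cyl u) :
    cyl u = PiNat.cylinder ξ u.length := by
  rw [mem_cyl_iff] at h
  ext η
  rw [mem_cyl_iff, PiNat.mem_cylinder_iff]
  exact forall₂_congr fun i hi => by rw [h i hi]

theorem isOpen_cyl (u : List X) : IsOpen (cyl u) := by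
  let : TopologicalSpace X := ⊥
  have : DiscreteTopology X := ⟨rfl⟩
  rcases (cyl u).eq_empty_or_nonempty with h | ⟨ξ, hξ⟩
  · exact h ▸ isOpen_empty
  · rw [cyl_eq_cylinder hξ]
    exact PiNat.isOpen_cylinder (fun _ => X) ξ _

theorem measurableSet_cyl (u : List X) : MeasurableSet (cyl u) :=
  MeasurableSpace.measurableSet_generateFrom (isOpen_cyl u)

theorem exists_cyl_append_subset {U : Set (ℕ → X)} (hU : IsOpen U) {ξ : ℕ → X} (hξ : ξ ∈ U)
    {u : List X} (hu : ξ ∈ cyl u) : ∃ y, cyl (u ++ y) ⊆ U := by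
  let : TopologicalSpace X := ⊥
  have : DiscreteTopology X := ⟨rfl⟩
  obtain ⟨_, ⟨ζ, n, rfl⟩, hζ, hsub⟩ :=
    (PiNat.isTopologicalBasis_cylinders fun _ : ℕ => X).exists_subset_of_mem_open hξ hU
  obtain ⟨η, rfl⟩ := hu
  refine ⟨Stream'.take n η, Subset.trans ?_ hsub⟩
  have hη : wcat u η ∈ cyl (u ++ Stream'.take n η) :=
    wcat_mem_cyl_append.2 ⟨Stream'.drop n η, (Stream'.append_take_drop n η).symm⟩
  rw [cyl_eq_cylinder hη, ← PiNat.mem_cylinder_iff_eq.1 hζ]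
  have hn : n ≤ (u ++ Stream'.take n η).length :=
    calc n = (Stream'.take n η).length := (Stream'.length_take n (s := η)).symm
      _ ≤ u.length + (Stream'.take n η).length := Nat.le_add_left _ _
      _ = (u ++ Stream'.take n η).length := List.length_append.symm
  exact PiNat.cylinder_anti _ hn

theorem baireSpace_cantorTop (X : Type) : BaireSpace (ℕ → X) := by
  let : TopologicalSpace X := ⊥
  have : DiscreteTopology X := ⟨rfl⟩
  exact @BaireSpace.of_completelyPseudoMetrizable (ℕ → X) Pi.topologicalSpace inferInstance

theorem exists_disjoint_cyl_append_of_isNowhereDense [Nonempty X] {N : Set (ℕ → X)}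
    (hN : IsNowhereDense N) (u : List X) : ∃ y, Disjoint (cyl (u ++ y)) N := by
  obtain ⟨ξ, hξu, hξN⟩ : ∃ ξ ∈ cyl u, ξ ∉ closure N := by
    by_contra! h
    have := (isOpen_cyl u).subset_interior_iff.2 h
    exact (cyl_nonempty u).ne_empty (subset_empty_iff.1 (hN ▸ this))
  obtain ⟨y, hy⟩ := exists_cyl_append_subset isClosed_closure.isOpen_compl hξN hξu
  exact ⟨y, disjoint_compl_left.mono hy subset_closure⟩

theorem exists_seq_isNowhereDense_of_isMeagre {α : Type*} [TopologicalSpace α] {M : Set α}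
    (hM : IsMeagre M) : ∃ N : ℕ → Set α, (∀ n, IsNowhereDense (N n)) ∧ M ⊆ ⋃ n, N n := by
  obtain ⟨S, hS, hSc, hMS⟩ := isMeagre_iff_countable_union_isNowhereDense.1 hM
  obtain ⟨N, hN⟩ := (hSc.insert ∅).exists_eq_range (insert_nonempty _ _)
  refine ⟨N, fun n => ?_, ?_⟩
  · rcases (hN ▸ mem_range_self n : N n ∈ insert ∅ S) with h | h
    exacts [h ▸ isNowhereDense_empty, hS _ h]
  · rw [← sUnion_range, ← hN]
    exact hMS.trans (sUnion_subset_sUnion (subset_insert _ _))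

/- `Y` is a winning strategy for the player avoiding `M` in the Banach–Mazur game: in round `n` the
position `u` is answered by `Y n u`. -/
theorem exists_strategy_of_isMeagre [Nonempty X] {M : Set (ℕ → X)} (hM : IsMeagre M) :
    ∃ Y : ℕ → List X → List X, ∀ ξ, (∀ n, ∃ u, ξ ∈ cyl (u ++ Y n u)) → ξ ∉ M := by
  obtain ⟨N, hN, hMN⟩ := exists_seq_isNowhereDense_of_isMeagre hM
  choose Y hY using fun n => exists_disjoint_cyl_append_of_isNowhereDense (hN n)
  refine ⟨Y, fun ξ hξ hξM => ?_⟩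
  obtain ⟨n, hn⟩ := mem_iUnion.1 (hMN hξM)
  obtain ⟨u, hu⟩ := hξ n
  exact disjoint_left.1 (hY n u) hu hn

end Topology

section LeftQuotients

variable {α : Type*}

theorem leftQuotient_ne_zero_iff {L : Language α} {u : List α} :
    L.leftQuotient u ≠ 0 ↔ ∃ z, u ++ z ∈ L :=
  nonempty_iff_ne_empty.symm

theorem leftQuotient_mul_singleton (L M : Language α) (a : α) :
    (L * M).leftQuotient [a] = L.leftQuotient [a] * M + ⨆ _ : [] ∈ L, M.leftQuotient [a] := by
  ext x
  simp only [Language.mem_leftQuotient, Language.mem_add, Language.mem_mul, Language.mem_iSup,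
    List.singleton_append, exists_prop]
  constructor
  · rintro ⟨_ | ⟨b, u⟩, hu, v, hv, h⟩
    · exact .inr ⟨hu, h ▸ hv⟩
    · obtain ⟨rfl, rfl⟩ := List.cons.inj h
      exact .inl ⟨u, hu, v, hv, rfl⟩
  · rintro (⟨u, hu, v, hv, rfl⟩ | ⟨hL, hx⟩)
    · exact ⟨a :: u, hu, v, hv, rfl⟩
    · exact ⟨[], hL, a :: x, hx, rfl⟩

theorem leftQuotient_kstar_singleton (L : Language α) (a : α) :
    (L∗).leftQuotient [a] = L.leftQuotient [a] * L∗ := by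
  ext x
  simp only [Language.mem_leftQuotient, Language.mem_mul, List.singleton_append]
  constructor
  · intro hx
    obtain ⟨_ | ⟨_ | ⟨b, u⟩, S⟩, h, hS⟩ := Language.mem_kstar_iff_exists_nonempty.1 hx
    · simp at h
    · exact absurd rfl (hS [] List.mem_cons_self).2
    · obtain ⟨rfl, rfl⟩ := List.cons.inj h
      exact ⟨u, (hS _ List.mem_cons_self).1, S.flatten,
        Language.join_mem_kstar fun y hy => (hS y (List.mem_cons_of_mem _ hy)).1, rfl⟩
  · rintro ⟨u, hu, v, hv, rfl⟩
    obtain ⟨S, rfl, hS⟩ := Language.mem_kstar.1 hv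
    exact Language.join_mem_kstar (L := (a :: u) :: S) (List.forall_mem_cons.2 ⟨hu, hS⟩)

theorem leftQuotient_sSup (T : Set (Language α)) (u : List α) :
    (sSup T).leftQuotient u = sSup ((·.leftQuotient u) '' T) := by
  ext x
  simp [sSup_eq_iSup, Language.mem_iSup]

theorem finite_range_leftQuotient_of_closed {L : Language α} {S : Set (Language α)} (hS : S.Finite)
    (hL : L ∈ S) (hstep : ∀ K ∈ S, ∀ a, K.leftQuotient [a] ∈ S) :
    (range L.leftQuotient).Finite := by
  refine hS.subset (range_subset_iff.2 fun u => ?_)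
  induction u using List.reverseRecOn with
  | nil => exact hL
  | append_singleton u a ih => exact Language.leftQuotient_append L u [a] ▸ hstep _ ih a

theorem leftQuotient_mem_range_leftQuotient {L K : Language α} (hK : K ∈ range L.leftQuotient)
    (u : List α) : K.leftQuotient u ∈ range L.leftQuotient := by
  obtain ⟨v, rfl⟩ := hK
  exact ⟨v ++ u, Language.leftQuotient_append L v u⟩

theorem finite_range_leftQuotient_of_finite {L : Language α} (hL : (L : Set (List α)).Finite) :
    (range L.leftQuotient).Finite := by
  have hsuffix : {y | ∃ u, u ++ y ∈ L}.Finite := by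
    refine (hL.biUnion fun l _ => List.finite_toSet l.tails).subset ?_
    rintro y ⟨u, hu⟩
    exact mem_biUnion hu (by simp)
  refine hsuffix.powerset.subset (range_subset_iff.2 fun u y hy => ⟨u, hy⟩)

theorem finite_range_leftQuotient_mul {L M : Language α} (hL : (range L.leftQuotient).Finite)
    (hM : (range M.leftQuotient).Finite) : (range (L * M).leftQuotient).Finite := by
  refine finite_range_leftQuotient_of_closed
    (S := image2 (fun K T => K * M + sSup T) (range L.leftQuotient) (𝒫 range M.leftQuotient))
    (hL.image2 _ hM.powerset) ⟨L, ⟨[], rfl⟩, ∅, empty_subset _, by simp⟩ ?_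
  rintro _ ⟨K, hK, T, hT, rfl⟩ a
  have hTa : (·.leftQuotient [a]) '' T ⊆ range M.leftQuotient :=
    image_subset_iff.2 fun Q hQ => leftQuotient_mem_range_leftQuotient (hT hQ) _
  refine ⟨K.leftQuotient [a], leftQuotient_mem_range_leftQuotient hK _,
    range (fun _ : [] ∈ K => M.leftQuotient [a]) ∪ (·.leftQuotient [a]) '' T,
    union_subset (range_subset_iff.2 fun _ => mem_range_self _) hTa, ?_⟩
  calc K.leftQuotient [a] * M + sSup (range (fun _ : [] ∈ K => M.leftQuotient [a]) ∪
        (·.leftQuotient [a]) '' T)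
    _ = K.leftQuotient [a] * M + (⨆ _ : [] ∈ K, M.leftQuotient [a]) +
        sSup ((·.leftQuotient [a]) '' T) := by rw [sSup_union, add_assoc]; rfl
    _ = (K * M).leftQuotient [a] + (sSup T).leftQuotient [a] := by
        rw [leftQuotient_mul_singleton, leftQuotient_sSup]
    _ = (K * M + sSup T).leftQuotient [a] := rfl

theorem finite_range_leftQuotient_kstar {L : Language α} (hL : (range L.leftQuotient).Finite) :
    (range (L∗).leftQuotient).Finite := by
  refine finite_range_leftQuotient_of_closed
    (S := insert (L∗) ((fun T => sSup T * L∗) '' 𝒫 range L.leftQuotient))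
    ((hL.powerset.image _).insert _) (mem_insert _ _) ?_
  rintro _ (rfl | ⟨T, hT, rfl⟩) a <;> right
  · refine ⟨{L.leftQuotient [a]}, singleton_subset_iff.2 (mem_range_self _), ?_⟩
    simp only [sSup_singleton, leftQuotient_kstar_singleton]
  have hTa : (·.leftQuotient [a]) '' T ⊆ range L.leftQuotient :=
    image_subset_iff.2 fun Q hQ => leftQuotient_mem_range_leftQuotient (hT hQ) _
  refine ⟨(·.leftQuotient [a]) '' T ∪ range fun _ : [] ∈ sSup T => L.leftQuotient [a],
    union_subset hTa (range_subset_iff.2 fun _ => mem_range_self _), ?_⟩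
  calc sSup ((·.leftQuotient [a]) '' T ∪ range fun _ : [] ∈ sSup T => L.leftQuotient [a]) * (L∗)
    _ = sSup ((·.leftQuotient [a]) '' T) * L∗ + (⨆ _ : [] ∈ sSup T, L.leftQuotient [a]) * (L∗) := by
        rw [sSup_union, ← add_mul]; rfl
    _ = (sSup T * L∗).leftQuotient [a] := by
        rw [leftQuotient_mul_singleton, leftQuotient_sSup, leftQuotient_kstar_singleton,
          Language.iSup_mul]

theorem IsRegLang.finite_range_leftQuotient {W : Language X} (h : IsRegLang W) :
    (range W.leftQuotient).Finite := by
  induction h with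
  | finite W hW => exact finite_range_leftQuotient_of_finite hW
  | union W V _ _ hW hV =>
    exact ((Language.IsRegular.of_finite_range_leftQuotient hW).add
      (.of_finite_range_leftQuotient hV)).finite_range_leftQuotient
  | concat W V _ _ hW hV => exact finite_range_leftQuotient_mul hW hV
  | star W _ hW => exact finite_range_leftQuotient_kstar hW

theorem exists_bound_of_forall_exists_leftQuotient_eq_zero {L : Language α}
    (hL : (range L.leftQuotient).Finite) (h : ∀ v, ∃ y, L.leftQuotient (v ++ y) = 0) :
    ∃ K, ∀ v, ∃ y : List α, y.length ≤ K ∧ L.leftQuotient (v ++ y) = 0 := by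
  have hquot : ∀ Q ∈ range L.leftQuotient, ∃ y, Q.leftQuotient y = 0 := by
    rintro _ ⟨v, rfl⟩
    simpa only [Language.leftQuotient_append] using h v
  choose! y hy using hquot
  obtain ⟨K, hK⟩ := (hL.image fun Q => (y Q).length).bddAbove
  refine ⟨K, fun v => ⟨y (L.leftQuotient v), hK ⟨_, mem_range_self v, rfl⟩, ?_⟩⟩
  rw [Language.leftQuotient_append]
  exact hy _ (mem_range_self v)

end LeftQuotients

section OmegaPowers

/-- The word `f 0 · f 1 ⋯ f (k - 1)`, the `k`-th partial product in the definition of `omegaPow`. -/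
def partialConcat (f : ℕ → List X) (k : ℕ) : List X := ((List.range k).map f).flatten

theorem partialConcat_succ (f : ℕ → List X) (k : ℕ) :
    partialConcat f (k + 1) = partialConcat f k ++ f k := by
  simp [partialConcat, List.range_succ]

theorem partialConcat_succ' (f : ℕ → List X) (k : ℕ) :
    partialConcat f (k + 1) = f 0 ++ partialConcat (fun i => f (i + 1)) k := by
  simp [partialConcat, List.range_succ_eq_map, Function.comp_def]

theorem le_length_partialConcat {f : ℕ → List X} (hf : ∀ i, f i ≠ []) (k : ℕ) :
    k ≤ (partialConcat f k).length := by
  induction k with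
  | zero => exact Nat.zero_le _
  | succ k ih =>
    rw [partialConcat_succ, List.length_append]
    exact Nat.add_le_add ih (List.length_pos_iff.2 (hf k))

theorem partialConcat_mem_kstar {V : Language X} {f : ℕ → List X} (hf : ∀ i, f i ∈ V) (k : ℕ) :
    partialConcat f k ∈ V∗ :=
  Language.join_mem_kstar (by simpa using fun i _ => hf i)

theorem exists_mem_omegaPow {V : Language X} {f : ℕ → List X} (hf : ∀ i, f i ∈ V ∧ f i ≠ []) :
    ∃ ξ ∈ omegaPow V, ∀ k, ξ ∈ cyl (partialConcat f k) := by
  obtain ⟨ξ, hξ⟩ := exists_forall_mem_cyl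
    (fun k => partialConcat_succ f k ▸ List.prefix_append _ _)
    (le_length_partialConcat fun i => (hf i).2)
  exact ⟨ξ, ⟨f, hf, hξ⟩, hξ⟩

theorem leftQuotient_kstar_ne_zero_of_mem_omegaPow {V : Language X} {ξ : ℕ → X}
    (hξ : ξ ∈ omegaPow V) {u : List X} (hu : ξ ∈ cyl u) : (V∗).leftQuotient u ≠ 0 := by
  obtain ⟨f, hf, hcyl⟩ := hξ
  have hlen := le_length_partialConcat (fun i => (hf i).2) u.length
  obtain ⟨z, hz⟩ := prefix_of_mem_cyl hu (hcyl u.length) hlen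
  exact leftQuotient_ne_zero_iff.2 ⟨z, hz ▸ partialConcat_mem_kstar (fun i => (hf i).1) _⟩

theorem exists_eq_wcat_of_mem_omegaPow {V : Language X} {ξ : ℕ → X} (hξ : ξ ∈ omegaPow V) :
    ∃ v ∈ V, v ≠ [] ∧ ∃ η ∈ omegaPow V, ξ = wcat v η := by
  obtain ⟨f, hf, hcyl⟩ := hξ
  obtain ⟨η, rfl⟩ : ξ ∈ cyl (f 0) := by simpa using hcyl 1
  refine ⟨f 0, (hf 0).1, (hf 0).2, η, ⟨fun i => f (i + 1), fun i => hf (i + 1), fun k => ?_⟩, rfl⟩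
  have hk : wcat (f 0) η ∈ cyl (partialConcat f (k + 1)) := hcyl (k + 1)
  rw [partialConcat_succ'] at hk
  exact wcat_mem_cyl_append.1 hk

theorem subset_omegaPow {V : Language X} {S : Set (ℕ → X)}
    (h : ∀ ξ ∈ S, ∃ v ∈ V, v ≠ [] ∧ ∃ η ∈ S, ξ = wcat v η) : S ⊆ omegaPow V := by
  intro ξ hξ
  choose! v hv hne η hη heq using h
  have hS (n : ℕ) : η^[n] ξ ∈ S := by
    induction n with
    | zero => exact hξ
    | succ n ih => exact Function.iterate_succ_apply' η n ξ ▸ hη _ ih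
  have hwcat (k : ℕ) : ξ = wcat (partialConcat (fun n => v (η^[n] ξ)) k) (η^[k] ξ) := by
    induction k with
    | zero => rfl
    | succ k ih =>
      rw [partialConcat_succ, wcat_append, Function.iterate_succ_apply', ← heq _ (hS k)]
      exact ih
  exact ⟨fun n => v (η^[n] ξ), fun n => ⟨hv _ (hS n), hne _ (hS n)⟩, fun k => ⟨_, hwcat k⟩⟩

theorem omegaPow_kstar_subset (V : Language X) : omegaPow (V∗) ⊆ omegaPow V := by
  let S : Set (ℕ → X) := {ξ | ∃ x ∈ V∗, ∃ η ∈ omegaPow (V∗), ξ = wcat x η}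
  have hS : S ⊆ omegaPow V := by
    refine subset_omegaPow ?_
    have peel {x : List X} (hx : x ∈ V∗) (hne : x ≠ []) {η : ℕ → X} (hη : η ∈ omegaPow (V∗)) :
        ∃ v ∈ V, v ≠ [] ∧ ∃ ζ ∈ S, wcat x η = wcat v ζ := by
      obtain ⟨_ | ⟨v, L⟩, rfl, hL⟩ := Language.mem_kstar_iff_exists_nonempty.1 hx
      · exact absurd rfl hne
      have hL' : L.flatten ∈ V∗ :=
        Language.join_mem_kstar fun y hy => (hL y (List.mem_cons_of_mem v hy)).1
      obtain ⟨hv, hvne⟩ := hL v List.mem_cons_self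
      exact ⟨v, hv, hvne, _, ⟨_, hL', η, hη, rfl⟩, wcat_append v _ η⟩
    rintro _ ⟨x, hx, η, hη, rfl⟩
    rcases eq_or_ne x [] with rfl | hne
    · obtain ⟨y, hy, hyne, ζ, hζ, rfl⟩ := exists_eq_wcat_of_mem_omegaPow hη
      exact peel hy hyne hζ
    · exact peel hx hne hη
  exact fun ξ hξ => hS ⟨[], Language.nil_mem_kstar V, ξ, hξ, rfl⟩

/- The blocks of the play are `v·y·z`: after `p·v` the opponent's strategy answers `y`, and `z`
brings the play back to `V∗`. -/
theorem exists_mem_omegaPow_forall_mem_cyl {V : Language X} {v : List X} (hv : v ≠ [])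
    (hV : ∀ y, (V∗).leftQuotient (v ++ y) ≠ 0) (Y : ℕ → List X → List X) :
    ∃ ξ ∈ omegaPow V, ∀ n, ∃ u, ξ ∈ cyl (u ++ Y n u) := by
  choose Z hZ using fun y => leftQuotient_ne_zero_iff.1 (hV y)
  let block (n : ℕ) (p : List X) : List X := v ++ Y n (p ++ v) ++ Z (Y n (p ++ v))
  let p : ℕ → List X := Nat.rec [] fun n q => q ++ block n q
  let f (n : ℕ) : List X := block n (p n)
  have hp (n : ℕ) : partialConcat f n = p n := by
    induction n with
    | zero => rfl
    | succ n ih => rw [partialConcat_succ, ih]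
  obtain ⟨ξ, hξ, hcyl⟩ := exists_mem_omegaPow (V := V∗) (f := f)
    fun n => ⟨hZ _, by simp [f, block, hv]⟩
  refine ⟨ξ, omegaPow_kstar_subset V hξ, fun n => ⟨p n ++ v, ?_⟩⟩
  have hprefix : p n ++ v ++ Y n (p n ++ v) <+: partialConcat f (n + 1) := by
    rw [partialConcat_succ, hp]
    exact ⟨Z (Y n (p n ++ v)), by simp only [f, block, List.append_assoc]⟩
  exact cyl_subset_cyl_of_prefix hprefix (hcyl (n + 1))

theorem exists_leftQuotient_kstar_eq_zero_of_isMeagre [Nonempty X] {V : Language X} {w : List X}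
    (h : IsMeagre (wcat w '' omegaPow V)) (v : List X) :
    ∃ y, (V∗).leftQuotient (v ++ y) = 0 := by
  by_contra! hV
  obtain ⟨x⟩ := ‹Nonempty X›
  obtain ⟨Y, hY⟩ := exists_strategy_of_isMeagre h
  obtain ⟨ξ, hξ, hcyl⟩ := exists_mem_omegaPow_forall_mem_cyl (v := v ++ [x]) (by simp)
    (fun y => by simpa using hV (x :: y)) fun n u => Y n (w ++ u)
  refine hY (wcat w ξ) (fun n => ?_) (mem_image_of_mem _ hξ)
  obtain ⟨u, hu⟩ := hcyl n
  exact ⟨w ++ u, List.append_assoc w u _ ▸ wcat_mem_cyl_append.2 hu⟩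

end OmegaPowers

section Porosity

/-- Every ball contains a subball missing `A` whose depth relative to the ball is at most `K`, for
some `K` depending only on `A`. This is all the measure estimate needs to know about `V^ω`. -/
def IsUniformlyPorous (A : Set (ℕ → X)) : Prop :=
  ∃ K, ∀ u, ∃ y : List X, y.length ≤ K ∧ Disjoint (cyl (u ++ y)) A

theorem isUniformlyPorous_omegaPow {V : Language X} (hV : (range (V∗).leftQuotient).Finite)
    (h : ∀ v, ∃ y, (V∗).leftQuotient (v ++ y) = 0) : IsUniformlyPorous (omegaPow V) := by
  obtain ⟨K, hK⟩ := exists_bound_of_forall_exists_leftQuotient_eq_zero hV h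
  refine ⟨K, fun u => ?_⟩
  obtain ⟨y, hyK, hy⟩ := hK u
  exact ⟨y, hyK, disjoint_left.2 fun ξ hξ hξV =>
    leftQuotient_kstar_ne_zero_of_mem_omegaPow hξV hξ hy⟩

theorem IsUniformlyPorous.image_wcat [Nonempty X] {A : Set (ℕ → X)} (hA : IsUniformlyPorous A)
    (w : List X) : IsUniformlyPorous (wcat w '' A) := by
  obtain ⟨K, hK⟩ := hA
  refine ⟨w.length + K, fun u => ?_⟩
  let r : List X := List.replicate w.length (Classical.arbitrary X)
  by_cases hw : w <+: u ++ r
  · obtain ⟨t, ht⟩ := hw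
    obtain ⟨y, hyK, hy⟩ := hK t
    refine ⟨r ++ y, by simpa [r] using hyK, ?_⟩
    rw [← List.append_assoc, ← ht, List.append_assoc, disjoint_left]
    rintro _ hξ ⟨η, hη, rfl⟩
    exact disjoint_left.1 hy (wcat_mem_cyl_append.1 hξ) hη
  · refine ⟨r, by simp [r], disjoint_left.2 ?_⟩
    rintro _ hξ ⟨η, -, rfl⟩
    exact hw (prefix_of_mem_cyl (wcat_mem_cyl w η) hξ (by simp [r]))

end Porosity

section Measure

theorem FullSupport.isOpenPosMeasure {μ : Measure (ℕ → X)} (h : FullSupport μ) :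
    μ.IsOpenPosMeasure :=
  ⟨fun U hU hne => (h U hU hne).ne'⟩

theorem Balanced.exists_pow_length_mul_le [Nonempty X] {μ : Measure (ℕ → X)} [μ.IsOpenPosMeasure]
    (hμ : Balanced μ) :
    ∃ c : ENNReal, 0 < c ∧ c ≤ 1 ∧ ∀ u y, c ^ y.length * μ (cyl u) ≤ μ (cyl (u ++ y)) := by
  obtain ⟨c, hc, hcμ⟩ := hμ
  have hstep (u : List X) (x : X) : min c 1 * μ (cyl u) ≤ μ (cyl (u ++ [x])) :=
    (mul_le_mul_left (min_le_left c 1) _).trans <|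
      (hcμ u x).resolve_left ((isOpen_cyl _).measure_pos μ (cyl_nonempty _)).ne'
  refine ⟨min c 1, lt_min hc one_pos, min_le_right c 1, fun u y => ?_⟩
  induction y generalizing u with
  | nil => simp
  | cons x y ih =>
    calc min c 1 ^ (y.length + 1) * μ (cyl u)
      _ = min c 1 ^ y.length * (min c 1 * μ (cyl u)) := by rw [pow_succ, mul_assoc]
      _ ≤ min c 1 ^ y.length * μ (cyl (u ++ [x])) := by gcongr; exact hstep u x
      _ ≤ μ (cyl (u ++ [x] ++ y)) := ih _
      _ = μ (cyl (u ++ x :: y)) := by rw [List.append_assoc, List.singleton_append]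

theorem measure_cyl_eq_tsum [Countable X] (μ : Measure (ℕ → X)) (u : List X) :
    μ (cyl u) = ∑' x, μ (cyl (u ++ [x])) := by
  rw [cyl_eq_iUnion, measure_iUnion (pairwise_disjoint_cyl_append_singleton u)
    fun x => measurableSet_cyl _]

theorem measure_cyl_inter_le_tsum [Countable X] (μ : Measure (ℕ → X)) (A : Set (ℕ → X))
    (u : List X) : μ (cyl u ∩ A) ≤ ∑' x, μ (cyl (u ++ [x]) ∩ A) := by
  rw [cyl_eq_iUnion, iUnion_inter]
  exact measure_iUnion_le _

theorem measure_cyl_inter_add_le_of_disjoint [Countable X] {μ : Measure (ℕ → X)}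
    {A : Set (ℕ → X)} {t : ENNReal} (ht : ∀ u, μ (cyl u ∩ A) ≤ t * μ (cyl u)) {u y : List X}
    (hy : Disjoint (cyl (u ++ y)) A) :
    μ (cyl u ∩ A) + t * μ (cyl (u ++ y)) ≤ t * μ (cyl u) := by
  classical
  induction y generalizing u with
  | nil =>
    rw [List.append_nil] at hy ⊢
    rw [hy.inter_eq, measure_empty, zero_add]
  | cons x y ih =>
    have hassoc : u ++ x :: y = u ++ [x] ++ y := List.append_cons u x y
    set d := t * μ (cyl (u ++ x :: y)) with hd
    have hletter (z : X) :
        μ (cyl (u ++ [z]) ∩ A) + (if z = x then d else 0) ≤ t * μ (cyl (u ++ [z])) := by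
      split_ifs with hz
      · rw [hz, hd, hassoc]
        exact ih (hassoc ▸ hy)
      · rw [add_zero]
        exact ht _
    calc μ (cyl u ∩ A) + d
      _ ≤ ∑' z, μ (cyl (u ++ [z]) ∩ A) + d := by gcongr; exact measure_cyl_inter_le_tsum μ A u
      _ = ∑' z, (μ (cyl (u ++ [z]) ∩ A) + if z = x then d else 0) := by
        rw [ENNReal.tsum_add, tsum_ite_eq]
      _ ≤ ∑' z, t * μ (cyl (u ++ [z])) := ENNReal.tsum_le_tsum hletter
      _ = t * μ (cyl u) := by rw [ENNReal.tsum_mul_left, ← measure_cyl_eq_tsum]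

theorem measure_cyl_inter_le_pow_mul [Countable X] {μ : Measure (ℕ → X)} [IsFiniteMeasure μ]
    {A : Set (ℕ → X)} {δ : ENNReal} (hδ : δ ≤ 1)
    (hA : ∀ u, ∃ y, δ * μ (cyl u) ≤ μ (cyl (u ++ y)) ∧ Disjoint (cyl (u ++ y)) A) (n : ℕ)
    (u : List X) : μ (cyl u ∩ A) ≤ (1 - δ) ^ n * μ (cyl u) := by
  induction n generalizing u with
  | zero => simpa using measure_mono inter_subset_left
  | succ n ih =>
    obtain ⟨y, hyμ, hyA⟩ := hA u
    set t := (1 - δ) ^ n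
    have ht : t ≤ 1 := pow_le_one' tsub_le_self n
    have hfin : t * (δ * μ (cyl u)) ≠ ⊤ :=
      ENNReal.mul_ne_top (ne_top_of_le_ne_top ENNReal.one_ne_top ht)
        (ENNReal.mul_ne_top (ne_top_of_le_ne_top ENNReal.one_ne_top hδ) (measure_ne_top μ _))
    refine ENNReal.le_of_add_le_add_right hfin ?_
    calc μ (cyl u ∩ A) + t * (δ * μ (cyl u))
      _ ≤ μ (cyl u ∩ A) + t * μ (cyl (u ++ y)) := by gcongr
      _ ≤ t * μ (cyl u) := measure_cyl_inter_add_le_of_disjoint ih hyA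
      _ = t * ((1 - δ + δ) * μ (cyl u)) := by rw [tsub_add_cancel_of_le hδ, one_mul]
      _ = (1 - δ) ^ (n + 1) * μ (cyl u) + t * (δ * μ (cyl u)) := by
        rw [pow_succ]; ring

variable [Countable X] [Nonempty X] {μ : Measure (ℕ → X)} [IsFiniteMeasure μ] [μ.IsOpenPosMeasure]

theorem Balanced.measure_eq_zero_of_isUniformlyPorous (hμ : Balanced μ) {A : Set (ℕ → X)}
    (hA : IsUniformlyPorous A) : μ A = 0 := by
  obtain ⟨c, hc, hc1, hcμ⟩ := hμ.exists_pow_length_mul_le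
  obtain ⟨K, hK⟩ := hA
  have hpow (n : ℕ) : μ A ≤ (1 - c ^ K) ^ n * μ univ := by
    have hsub (u : List X) :
        ∃ y, c ^ K * μ (cyl u) ≤ μ (cyl (u ++ y)) ∧ Disjoint (cyl (u ++ y)) A := by
      obtain ⟨y, hyK, hy⟩ := hK u
      exact ⟨y, (mul_le_mul_left (pow_le_pow_right_of_le_one' hc1 hyK) _).trans (hcμ u y), hy⟩
    simpa using measure_cyl_inter_le_pow_mul (pow_le_one' hc1 K) hsub n []
  have hlt : 1 - c ^ K < 1 :=
    ENNReal.sub_lt_self ENNReal.one_ne_top one_ne_zero (pow_ne_zero K hc.ne')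
  have hlim := ENNReal.Tendsto.mul_const (ENNReal.tendsto_pow_atTop_nhds_zero_of_lt_one hlt)
    (.inr (measure_ne_top μ univ))
  rw [zero_mul] at hlim
  exact le_zero_iff.1 (ge_of_tendsto' hlim hpow)

theorem Balanced.measure_catOmega_omegaPow_eq_zero (hμ : Balanced μ) {W V : Language X}
    (hV : IsRegLang V) (h : IsMeagre (catOmega W (omegaPow V))) :
    μ (catOmega W (omegaPow V)) = 0 := by
  rw [catOmega_eq_biUnion] at h ⊢
  refine (measure_biUnion_null_iff (to_countable _)).2 fun w hw => ?_
  have hw' : IsMeagre (wcat w '' omegaPow V) :=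
    h.mono (subset_biUnion_of_mem (u := fun w => wcat w '' omegaPow V) hw)
  have hporous := isUniformlyPorous_omegaPow hV.star.finite_range_leftQuotient
    (exists_leftQuotient_kstar_eq_zero_of_isMeagre hw')
  exact hμ.measure_eq_zero_of_isUniformlyPorous (hporous.image_wcat w)

theorem IsRegOmega.measure_eq_zero_of_isMeagre {A : Set (ℕ → X)} (hA : IsRegOmega A)
    (hmeagre : IsMeagre A) (hμ : Balanced μ) : μ A = 0 := by
  obtain ⟨n, W, V, hWV, rfl⟩ := hA
  exact measure_iUnion_null fun i =>
    hμ.measure_catOmega_omegaPow_eq_zero (hWV i).2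
      (hmeagre.mono (subset_iUnion_of_subset i Subset.rfl))

end Measure

theorem measure_eq_zero_iff_isMeagre_of_symmDiff_subset {α : Type*} [TopologicalSpace α]
    [BaireSpace α] [MeasurableSpace α] {μ : Measure α} [μ.IsOpenPosMeasure] {F E N : Set α}
    (hE : IsOpen E) (hN : IsMeagre N) (hμN : μ N = 0) (h : symmDiff F E ⊆ N) :
    μ F = 0 ↔ IsMeagre F := by
  have hEF : E ⊆ F ∪ N := by
    rw [← sdiff_subset_iff]
    exact subset_union_right.trans h
  have hFN : E = ∅ → F ⊆ N := by
    rintro rfl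
    exact (symmDiff_bot F).ge.trans h
  constructor <;> intro hF
  · have hE0 : μ E = 0 := measure_mono_null hEF (measure_union_null hF hμN)
    exact hN.mono (hFN (hE.eq_empty_of_measure_zero hE0))
  · refine measure_mono_null (hFN ?_) hμN
    by_contra hne
    exact not_isMeagre_of_isOpen hE (nonempty_iff_ne_empty.2 hne) ((hF.union hN).mono hEF)

theorem stmt11 {X : Type} [Fintype X] (hX : 2 ≤ Fintype.card X)
    (F E F' : Set (ℕ → X)) (hE : @IsOpen _ (cantorTop X) E)
    (hreg : IsRegOmega F') (hmea : @IsMeagre _ (cantorTop X) F')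
    (hΔ : symmDiff F E ⊆ F') :
    ∀ μ : @MeasureTheory.Measure (ℕ → X) (cantorBorel X),
      FiniteNonNull μ → FullSupport μ → Balanced μ →
        (μ F = 0 ↔ @IsMeagre _ (cantorTop X) F) := by
  intro μ hfin hsupp hbal
  have : Nonempty X := Fintype.card_pos_iff.1 (by omega)
  have : IsFiniteMeasure μ := ⟨hfin.2⟩
  have := hsupp.isOpenPosMeasure
  have := baireSpace_cantorTop X
  exact measure_eq_zero_iff_isMeagre_of_symmDiff_subset hE hmea
    (hreg.measure_eq_zero_of_isMeagre hmea hbal) hΔ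

end AutoBaire
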